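/- Let E, F ∈ GL_2(ℂ) satisfy FᵀEᵀEF = λI for some λ ∈ ℂ^×, and suppose the solutions q of q² − λ^{−1/2} tr(EᵀE⁻¹) q + 1 = 0 are generic (q = ±1 or not a root of unity), so that Mrozinski's quantum group G(E,F) is cosemisimple. Then GKdim G(E,F) = dim GL(2) = 4. -/

import Mathlib

/-!
Background definitions: comodules over a Hopf algebra, simple comodules, direct
summands, supports, subcoalgebras, cosemisimplicity, Gelfand-Kirillov dimension,
and (measured) Grothendieck semirings of cosemisimple Hopf algebras.
-/

open TensorProduct

/-- The data of a coaction of a Hopf algebra `H` on a `k`-vector space `X`: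
a linear map `ρ : X → X ⊗ H`.  The comodule axioms are recorded separately in
`Comod.IsComodule`. -/
structure Comod (k : Type) [Field k] (H : Type) [Ring H] [HopfAlgebra k H] : Type 1 where
  X : Type
  [addCommGroup : AddCommGroup X]
  [module : Module k X]
  ρ : X →ₗ[k] X ⊗[k] H

attribute [instance] Comod.addCommGroup Comod.module

namespace Comod

variable {k : Type} [Field k] {H : Type} [Ring H] [HopfAlgebra k H]

/-- The trivial `H`-comodule `𝟏`, i.e. `k` with coaction `x ↦ x ⊗ 1`. -/
noncomputable def unit (k : Type) [Field k] (H : Type) [Ring H] [HopfAlgebra k H] :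
    Comod k H where
  X := k
  ρ := (TensorProduct.mk k k H).flip 1

/-- The regular comodule: `H` coacting on itself by comultiplication. -/
noncomputable def regular (k : Type) [Field k] (H : Type) [Ring H] [HopfAlgebra k H] :
    Comod k H where
  X := H
  ρ := Coalgebra.comul

/-- Tensor product of comodules: the coaction on `M ⊗ N` is
`(id ⊗ id ⊗ μ_H) ∘ (id ⊗ τ ⊗ id) ∘ (ρ_M ⊗ ρ_N)`. -/
noncomputable def tensor (M N : Comod k H) : Comod k H where
  X := M.X ⊗[k] N.X
  ρ := (LinearMap.mul' k H).lTensor (M.X ⊗[k] N.X)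
        ∘ₗ (TensorProduct.tensorTensorTensorComm k M.X H N.X H).toLinearMap
        ∘ₗ TensorProduct.map M.ρ N.ρ

/-- Binary direct sum of comodules. -/
noncomputable def dsum (M N : Comod k H) : Comod k H where
  X := M.X × N.X
  ρ := (LinearMap.inl k M.X N.X).rTensor H ∘ₗ M.ρ ∘ₗ LinearMap.fst k M.X N.X
     + (LinearMap.inr k M.X N.X).rTensor H ∘ₗ N.ρ ∘ₗ LinearMap.snd k M.X N.X

/-- Finite direct sum of a family of comodules. -/
noncomputable def pi {ι : Type} [Fintype ι] (S : ι → Comod k H) : Comod k H where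
  X := ∀ i, (S i).X
  ρ := letI := Classical.decEq ι
    ∑ i : ι, (LinearMap.single k (fun j => (S j).X) i).rTensor H ∘ₗ (S i).ρ
        ∘ₗ LinearMap.proj i

/-- `n`-th tensor power of a comodule (`M^{⊗0} = 𝟏`, `M^{⊗1} = M`). -/
noncomputable def tpow (M : Comod k H) : ℕ → Comod k H
  | 0 => unit k H
  | 1 => M
  | n + 2 => (M.tpow (n + 1)).tensor M

/-- A linear map is a map of comodules if it intertwines the coactions. -/
def IsHom (M N : Comod k H) (f : M.X →ₗ[k] N.X) : Prop :=
  N.ρ ∘ₗ f = f.rTensor H ∘ₗ M.ρ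

/-- Isomorphism of comodules. -/
def Iso (M N : Comod k H) : Prop :=
  ∃ e : M.X ≃ₗ[k] N.X, IsHom M N e.toLinearMap

/-- The comodule axioms (coassociativity and counitality) for a coaction. -/
def IsComodule (M : Comod k H) : Prop :=
  (M.ρ.rTensor H ∘ₗ M.ρ =
      (TensorProduct.assoc k M.X H H).symm.toLinearMap
        ∘ₗ (Coalgebra.comul (R := k) (A := H)).lTensor M.X ∘ₗ M.ρ) ∧
  (TensorProduct.rid k M.X).toLinearMap
      ∘ₗ (Coalgebra.counit (R := k) (A := H)).lTensor M.X ∘ₗ M.ρ = LinearMap.id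

/-- A subspace `N ⊆ M` is a subcomodule if the coaction restricts to `N ⊗ H`. -/
def IsSubcomodule (M : Comod k H) (N : Submodule k M.X) : Prop :=
  ∀ x ∈ N, M.ρ x ∈ LinearMap.range (N.subtype.rTensor H)

/-- Simple (hence finite-dimensional) comodules. -/
def IsSimple (M : Comod k H) : Prop :=
  M.IsComodule ∧ Nontrivial M.X ∧ FiniteDimensional k M.X ∧
    ∀ N : Submodule k M.X, M.IsSubcomodule N → N = ⊥ ∨ N = ⊤

/-- `S` is a direct summand of `M` (as comodules): the inclusion splits. -/
def DirectSummand (S M : Comod k H) : Prop :=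
  ∃ (i : S.X →ₗ[k] M.X) (p : M.X →ₗ[k] S.X),
    IsHom S M i ∧ IsHom M S p ∧ p ∘ₗ i = LinearMap.id

/-- `C` is the support of the comodule `M`: the (unique) minimal subspace
`C ⊆ H` with `ρ(M) ⊆ M ⊗ C`. -/
def IsSupport (M : Comod k H) (C : Submodule k H) : Prop :=
  (∀ x : M.X, M.ρ x ∈ LinearMap.range (C.subtype.lTensor M.X)) ∧
    ∀ C' : Submodule k H,
      (∀ x : M.X, M.ρ x ∈ LinearMap.range (C'.subtype.lTensor M.X)) → C ≤ C'

end Comod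

/-- A subspace `C ⊆ H` is a subcoalgebra if `Δ(C) ⊆ C ⊗ C`. -/
def IsSubcoalgebra (k : Type) [Field k] (H : Type) [Ring H] [HopfAlgebra k H]
    (C : Submodule k H) : Prop :=
  ∀ x ∈ C, Coalgebra.comul (R := k) x ∈
    LinearMap.range (TensorProduct.map C.subtype C.subtype)

/-- A simple subcoalgebra: a nonzero subcoalgebra with no proper nonzero
subcoalgebras. -/
def IsSimpleSubcoalgebra (k : Type) [Field k] (H : Type) [Ring H] [HopfAlgebra k H]
    (C : Submodule k H) : Prop :=
  IsSubcoalgebra k H C ∧ C ≠ ⊥ ∧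
    ∀ D : Submodule k H, D ≤ C → IsSubcoalgebra k H D → D = ⊥ ∨ D = C

/-- A Hopf algebra is cosemisimple if every subcomodule of every comodule is a
direct summand. -/
def IsCosemisimple (k : Type) [Field k] (H : Type) [Ring H] [HopfAlgebra k H] : Prop :=
  ∀ M : Comod k H, M.IsComodule →
    ∀ N : Submodule k M.X, M.IsSubcomodule N →
      ∃ N' : Submodule k M.X, M.IsSubcomodule N' ∧ IsCompl N N'

open scoped ENNReal in
/-- The Gelfand-Kirillov dimension of a `k`-algebra `A`:
`sup_V limsup_n log(dim V^n)/log n` over finite-dimensional subspaces `V ⊆ A`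
(for a finitely generated algebra this agrees with the value computed from any
finite-dimensional generating subspace containing `1`). -/
noncomputable def GKdim (k : Type) (A : Type) [Field k] [Ring A] [Algebra k A] : ℝ≥0∞ :=
  ⨆ (V : Submodule k A) (_ : FiniteDimensional k V),
    Filter.limsup
      (fun n : ℕ => ENNReal.ofReal
        (Real.log (Module.finrank k ↥(V ^ n)) / Real.log n)) Filter.atTop

/-- The (measured) Grothendieck semiring of a cosemisimple Hopf algebra `H`:
a commutative semiring `R` together with a class map `cls` on finite-dimensional
`H`-comodules which is constant on isomorphism classes, additive on direct sums,
multiplicative on tensor products, sends `𝟏` to `1`, and induces a bijection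
between iso-classes of finite-dimensional comodules and elements of `R`.
The dimension function `d_H` on `R_+(H)` is recovered as `cls M ↦ dim_k M`. -/
structure GrSemiring (k : Type) [Field k] (H : Type) [Ring H] [HopfAlgebra k H] :
    Type 1 where
  R : Type
  [commSemiring : CommSemiring R]
  cls : Comod k H → R
  cls_one : cls (Comod.unit k H) = 1
  cls_iso : ∀ M N : Comod k H, M.IsComodule → N.IsComodule →
    FiniteDimensional k M.X → FiniteDimensional k N.X → Comod.Iso M N → cls M = cls N
  cls_dsum : ∀ M N : Comod k H, M.IsComodule → N.IsComodule →
    FiniteDimensional k M.X → FiniteDimensional k N.X →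
      cls (M.dsum N) = cls M + cls N
  cls_tensor : ∀ M N : Comod k H, M.IsComodule → N.IsComodule →
    FiniteDimensional k M.X → FiniteDimensional k N.X →
      cls (M.tensor N) = cls M * cls N
  cls_surj : ∀ r : R, ∃ M : Comod k H, M.IsComodule ∧ FiniteDimensional k M.X ∧ cls M = r
  cls_inj : ∀ M N : Comod k H, M.IsComodule → N.IsComodule →
    FiniteDimensional k M.X → FiniteDimensional k N.X → cls M = cls N → Comod.Iso M N

attribute [instance] GrSemiring.commSemiring

/-!
For a cosemisimple Hopf algebra over an algebraically closed field, the Peter–Weyl theorem writes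
the algebra as the direct sum of the coefficient spaces of its simple comodules, the one of `M`
having dimension `(dim M)²`. Write `C n m` for the coefficient space of `S n m`; it has dimension
`(n + 1)²`. Coefficients of a tensor product are products of coefficients, so the fusion rules
multiply the `C n m` like the coefficient spaces of `Symⁿ ⊗ detᵐ`. The rules only give products with
`C 1 0` on the left; `C 0 1` and `C 1 0` nevertheless commute, because `S 0 1 ⊗ S 1 0` contains a
simple comodule whose coefficients lie in `C 1 0 ^ 3 = C 3 0 ⊔ C 1 1`, and `S 3 0` is too big.
Hence the powers of a generating subspace are sandwiched between sums of `C n m` over boxes of side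
proportional to the exponent `N`, and `∑ (n + 1)²` over such a box grows like `N ^ 4`.
-/

section Slice

variable {R H X Y : Type*} [CommRing R] [AddCommGroup H] [Module R H]
  [AddCommGroup X] [Module R X] [AddCommGroup Y] [Module R Y]

/-- The slice map `id ⊗ f : X ⊗ H → X` of a functional `f` on `H`. -/
noncomputable def slice (X : Type*) [AddCommGroup X] [Module R X] :
    Module.Dual R H →ₗ[R] X ⊗[R] H →ₗ[R] X :=
  LinearMap.compRight R (TensorProduct.rid R X).toLinearMap ∘ₗ LinearMap.lTensorHom X

@[simp]
lemma slice_tmul (f : Module.Dual R H) (x : X) (h : H) : slice X f (x ⊗ₜ h) = f h • x := by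
  simp [slice]

lemma slice_rTensor (f : Module.Dual R H) (φ : X →ₗ[R] Y) (u : X ⊗[R] H) :
    slice Y f (φ.rTensor H u) = φ (slice X f u) := by
  have h : slice Y f ∘ₗ φ.rTensor H = φ ∘ₗ slice X f := TensorProduct.ext' fun x y => by simp
  exact LinearMap.congr_fun h u

lemma exists_eq_sum_slice_tmul {ι : Type*} (b : Module.Basis ι R H) (u : X ⊗[R] H) :
    ∃ s : Finset ι, u = ∑ i ∈ s, slice X (b.coord i) u ⊗ₜ b i := by
  classical
  let e := TensorProduct.equivFinsuppOfBasisRight (M := X) b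
  refine ⟨(e u).support, ?_⟩
  conv_lhs => rw [← e.symm_apply_apply u, TensorProduct.equivFinsuppOfBasisRight_symm_apply]
  refine Finset.sum_congr rfl fun i _ => ?_
  rw [TensorProduct.equivFinsuppOfBasisRight_apply]
  rfl

lemma slice_ext [Module.Free R H] {u v : X ⊗[R] H} (h : ∀ f, slice X f u = slice X f v) :
    u = v := by
  obtain ⟨s, huv⟩ := exists_eq_sum_slice_tmul (Module.Free.chooseBasis R H) (u - v)
  rw [← sub_eq_zero, huv]
  exact Finset.sum_eq_zero fun i _ => by rw [map_sub, h, sub_self, zero_tmul]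

lemma mem_range_rTensor_subtype_iff [Module.Free R H] {N : Submodule R X} {u : X ⊗[R] H} :
    u ∈ LinearMap.range (N.subtype.rTensor H) ↔ ∀ f, slice X f u ∈ N := by
  constructor
  · rintro ⟨v, rfl⟩ f
    rw [slice_rTensor]
    exact (slice N f v).2
  · intro h
    obtain ⟨s, hu⟩ := exists_eq_sum_slice_tmul (Module.Free.chooseBasis R H) u
    rw [hu]
    exact Submodule.sum_mem _ fun i _ => ⟨⟨_, h _⟩ ⊗ₜ _, LinearMap.rTensor_tmul ..⟩

lemma slice_slice_assoc_symm (f g : Module.Dual R H) (δ : H →ₗ[R] H ⊗[R] H) (u : X ⊗[R] H) :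
    slice X f (slice (X ⊗[R] H) g ((TensorProduct.assoc R X H H).symm (δ.lTensor X u))) =
      slice X (f ∘ₗ slice H g ∘ₗ δ) u := by
  induction u with
  | zero => simp only [map_zero]
  | add u v hu hv => simp only [map_add, hu, hv]
  | tmul x h =>
    simp only [LinearMap.lTensor_tmul, slice_tmul, LinearMap.comp_apply]
    induction δ h with
    | zero => simp
    | add d e hd he => simp only [map_add, tmul_add, hd, he, add_smul]
    | tmul a b => simp [smul_smul]

end Slice

namespace Comod

variable {k : Type} [Field k] {H : Type} [Ring H] [HopfAlgebra k H]

section Action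

/-- The action `x ↦ (id ⊗ f) (ρ x)` of a functional `f` on `H` on a comodule.  For a comodule it
makes `M.X` a module over the convolution algebra `Dual k H`, and it determines the coaction. -/
noncomputable def act (M : Comod k H) : Module.Dual k H →ₗ[k] Module.End k M.X :=
  LinearMap.lcomp k M.X M.ρ ∘ₗ slice M.X

variable {M N : Comod k H}

lemma act_apply (f : Module.Dual k H) (x : M.X) : act M f x = slice M.X f (M.ρ x) := rfl

lemma isHom_iff {φ : M.X →ₗ[k] N.X} : IsHom M N φ ↔ ∀ f x, φ (act M f x) = act N f (φ x) := by
  simp only [act_apply, ← slice_rTensor]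
  exact ⟨fun h f x => congrArg (slice N.X f) (LinearMap.congr_fun h x).symm,
    fun h => LinearMap.ext fun x => slice_ext fun f => (h f x).symm⟩

lemma isSubcomodule_iff {L : Submodule k M.X} :
    M.IsSubcomodule L ↔ ∀ f, ∀ x ∈ L, act M f x ∈ L := by
  simp only [IsSubcomodule, mem_range_rTensor_subtype_iff, act_apply]
  exact ⟨fun h f x hx => h x hx f, fun h x hx f => h f x hx⟩

/-- The coassociativity axiom says that `act M` is multiplicative for the convolution product
`(f, g) ↦ f ∘ (id ⊗ g) ∘ Δ` on the dual of `H`. -/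
lemma isComodule_iff : M.IsComodule ↔ act M Coalgebra.counit = LinearMap.id ∧
    ∀ f g x, act M f (act M g x) = act M (f ∘ₗ slice H g ∘ₗ Coalgebra.comul) x := by
  have hact (f g : Module.Dual k H) (x : M.X) :
      act M f (act M g x) = slice M.X f (slice (M.X ⊗[k] H) g (M.ρ.rTensor H (M.ρ x))) := by
    rw [slice_rTensor]; rfl
  have hconv (f g : Module.Dual k H) (x : M.X) : act M (f ∘ₗ slice H g ∘ₗ Coalgebra.comul) x =
      slice M.X f (slice (M.X ⊗[k] H) g
        ((TensorProduct.assoc k M.X H H).symm (Coalgebra.comul.lTensor M.X (M.ρ x)))) :=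
    (slice_slice_assoc_symm f g Coalgebra.comul (M.ρ x)).symm
  simp only [hact, hconv]
  refine and_comm.trans (and_congr Iff.rfl ⟨fun h f g x => ?_, fun h => ?_⟩)
  · exact congrArg (fun u => slice M.X f (slice (M.X ⊗[k] H) g u)) (LinearMap.congr_fun h x)
  · exact LinearMap.ext fun x => slice_ext fun g => slice_ext fun f => h f g x

end Action

section Hom

variable {M N P : Comod k H}

lemma IsHom.comp {ψ : N.X →ₗ[k] P.X} {φ : M.X →ₗ[k] N.X} (hψ : IsHom N P ψ) (hφ : IsHom M N φ) :
    IsHom M P (ψ ∘ₗ φ) := by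
  rw [isHom_iff] at *
  exact fun f x => by simp only [LinearMap.comp_apply, hφ, hψ]

lemma IsHom.sum {ι : Type*} {s : Finset ι} {φ : ι → M.X →ₗ[k] N.X}
    (hφ : ∀ i ∈ s, IsHom M N (φ i)) : IsHom M N (∑ i ∈ s, φ i) := by
  simp only [isHom_iff, LinearMap.sum_apply, map_sum] at *
  exact fun f x => Finset.sum_congr rfl fun i hi => hφ i hi f x

lemma IsHom.sub_smul {φ ψ : M.X →ₗ[k] N.X} (hφ : IsHom M N φ) (hψ : IsHom M N ψ) (c : k) :
    IsHom M N (φ - c • ψ) := by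
  simp only [isHom_iff, LinearMap.sub_apply, LinearMap.smul_apply, map_sub, map_smul] at *
  exact fun f x => by rw [hφ, hψ]

end Hom

section Constructions

variable {M N : Comod k H}

lemma isComodule_regular : (regular k H).IsComodule := by
  have coassoc := (Coalgebra.coassoc_symm (R := k) (A := H)).symm
  have counital : (TensorProduct.rid k H).toLinearMap ∘ₗ
      (Coalgebra.counit (R := k) (A := H)).lTensor H ∘ₗ Coalgebra.comul = LinearMap.id := by
    ext x
    simp
  exact ⟨coassoc, counital⟩

/-- A subcomodule, regarded as a comodule. -/
noncomputable abbrev sub (M : Comod k H) (L : Submodule k M.X) (hL : M.IsSubcomodule L) :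
    Comod k H where
  X := L
  ρ := LinearMap.codRestrictOfInjective (M.ρ ∘ₗ L.subtype) (L.subtype.rTensor H)
    (Module.Flat.rTensor_preserves_injective_linearMap _ L.injective_subtype) fun x => hL x x.2

lemma isHom_subtype {L : Submodule k M.X} (hL : M.IsSubcomodule L) :
    IsHom (M.sub L hL) M L.subtype :=
  (LinearMap.codRestrictOfInjective_comp ..).symm

lemma coe_act_sub {L : Submodule k M.X} (hL : M.IsSubcomodule L) (f : Module.Dual k H) (x : L) :
    (act (M.sub L hL) f x : M.X) = act M f x :=
  isHom_iff.1 (isHom_subtype hL) f x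

lemma isComodule_sub (hM : M.IsComodule) {L : Submodule k M.X} (hL : M.IsSubcomodule L) :
    (M.sub L hL).IsComodule := by
  rw [isComodule_iff] at hM ⊢
  refine ⟨LinearMap.ext fun x => Subtype.ext ?_, fun f g x => Subtype.ext ?_⟩
  · rw [coe_act_sub, hM.1]; rfl
  · rw [coe_act_sub, coe_act_sub, coe_act_sub, hM.2]

section Pi

variable {ι : Type} [Fintype ι] {S : ι → Comod k H}

lemma isHom_proj (i : ι) : IsHom (pi S) (S i) (LinearMap.proj i) := by
  classical
  change (S i).ρ ∘ₗ LinearMap.proj i = (LinearMap.proj i).rTensor H ∘ₗ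
    ∑ j, (LinearMap.single k (fun j => (S j).X) j).rTensor H ∘ₗ (S j).ρ ∘ₗ LinearMap.proj j
  refine LinearMap.ext fun x => ?_
  simp only [LinearMap.comp_apply, LinearMap.sum_apply, map_sum, ← LinearMap.rTensor_comp_apply]
  rw [Finset.sum_eq_single i]
  · rw [LinearMap.proj_comp_single_same, LinearMap.rTensor_id, LinearMap.id_apply]
  · intro j _ hj
    rw [LinearMap.proj_comp_single_ne _ _ _ _ hj.symm, LinearMap.rTensor_zero, LinearMap.zero_apply]
  · simp

lemma act_pi (f : Module.Dual k H) (x : (pi S).X) (i : ι) :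
    act (pi S) f x i = act (S i) f (x i) :=
  isHom_iff.1 (isHom_proj i) f x

lemma isComodule_pi (hS : ∀ i, (S i).IsComodule) : (pi S).IsComodule := by
  simp only [isComodule_iff] at hS ⊢
  exact ⟨LinearMap.ext fun x => funext fun i => by rw [act_pi, (hS i).1]; rfl,
    fun f g x => funext fun i => by rw [act_pi, act_pi, act_pi, (hS i).2]⟩

end Pi

lemma isHom_inl : IsHom M (M.dsum N) (LinearMap.inl k M.X N.X) := by
  change ((LinearMap.inl k M.X N.X).rTensor H ∘ₗ M.ρ ∘ₗ LinearMap.fst k M.X N.X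
     + (LinearMap.inr k M.X N.X).rTensor H ∘ₗ N.ρ ∘ₗ LinearMap.snd k M.X N.X) ∘ₗ
       LinearMap.inl k M.X N.X = _
  simp only [LinearMap.add_comp, LinearMap.comp_assoc, LinearMap.fst_comp_inl,
    LinearMap.snd_comp_inl, LinearMap.comp_zero, add_zero, LinearMap.comp_id]
  rfl

lemma isHom_inr : IsHom N (M.dsum N) (LinearMap.inr k M.X N.X) := by
  change ((LinearMap.inl k M.X N.X).rTensor H ∘ₗ M.ρ ∘ₗ LinearMap.fst k M.X N.X
     + (LinearMap.inr k M.X N.X).rTensor H ∘ₗ N.ρ ∘ₗ LinearMap.snd k M.X N.X) ∘ₗ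
       LinearMap.inr k M.X N.X = _
  simp only [LinearMap.add_comp, LinearMap.comp_assoc, LinearMap.fst_comp_inr,
    LinearMap.snd_comp_inr, LinearMap.comp_zero, zero_add, LinearMap.comp_id]
  rfl

end Constructions

section Coefficients

/-- The matrix coefficient `(ξ ⊗ id) (ρ x)` of a comodule. -/
noncomputable def coeff (M : Comod k H) : Module.Dual k M.X →ₗ[k] M.X →ₗ[k] H :=
  LinearMap.lcomp k H M.ρ ∘ₗ LinearMap.compRight k (TensorProduct.lid k H).toLinearMap ∘ₗ
    LinearMap.rTensorHom H

variable {M N : Comod k H}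

lemma coeff_apply (ξ : Module.Dual k M.X) (x : M.X) :
    coeff M ξ x = TensorProduct.lid k H (ξ.rTensor H (M.ρ x)) := rfl

lemma apply_coeff (f : Module.Dual k H) (ξ : Module.Dual k M.X) (x : M.X) :
    f (coeff M ξ x) = ξ (act M f x) := by
  rw [coeff_apply, act_apply]
  induction M.ρ x with
  | zero => simp only [map_zero]
  | add u v hu hv => simp only [map_add, hu, hv]
  | tmul y h => simp [mul_comm]

lemma IsHom.coeff_comp {φ : M.X →ₗ[k] N.X} (hφ : IsHom M N φ) (ξ : Module.Dual k N.X) :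
    coeff M (ξ ∘ₗ φ) = coeff N ξ ∘ₗ φ := by
  ext x
  refine Module.eval_apply_injective k <| LinearMap.ext fun f => ?_
  simp only [LinearMap.comp_apply, Module.Dual.eval_apply, apply_coeff, isHom_iff.1 hφ]

lemma apply_slice_comul_coeff (f g : Module.Dual k H) (ξ : Module.Dual k M.X) (x : M.X) :
    f (slice H g (Coalgebra.comul (coeff M ξ x))) =
      ξ (act M (f ∘ₗ slice H g ∘ₗ Coalgebra.comul) x) :=
  apply_coeff (f ∘ₗ slice H g ∘ₗ Coalgebra.comul) ξ x

lemma apply_slice_rTensor_coeff (f g : Module.Dual k H) (ξ : Module.Dual k M.X) (x : M.X) :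
    f (slice H g ((coeff M ξ).rTensor H (M.ρ x))) = ξ (act M f (act M g x)) := by
  rw [slice_rTensor, apply_coeff]
  rfl

lemma IsComodule.counit_coeff (hM : M.IsComodule) (ξ : Module.Dual k M.X) (x : M.X) :
    Coalgebra.counit (R := k) (coeff M ξ x) = ξ x := by
  rw [apply_coeff, (isComodule_iff.1 hM).1, LinearMap.id_apply]

lemma IsComodule.comul_coeff (hM : M.IsComodule) (ξ : Module.Dual k M.X) (x : M.X) :
    Coalgebra.comul (R := k) (coeff M ξ x) = (coeff M ξ).rTensor H (M.ρ x) := by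
  refine slice_ext fun g => Module.eval_apply_injective k <| LinearMap.ext fun f => ?_
  simp only [Module.Dual.eval_apply, apply_slice_comul_coeff, apply_slice_rTensor_coeff,
    (isComodule_iff.1 hM).2]

lemma IsComodule.isHom_coeff (hM : M.IsComodule) (ξ : Module.Dual k M.X) :
    IsHom M (regular k H) (coeff M ξ) :=
  LinearMap.ext (hM.comul_coeff ξ)

lemma isComodule_of_coeff {ι : Type*} (ξ : ι → Module.Dual k M.X)
    (hξ : ∀ x y, (∀ i, ξ i x = ξ i y) → x = y)
    (counit_coeff : ∀ i x, Coalgebra.counit (R := k) (coeff M (ξ i) x) = ξ i x)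
    (comul_coeff : ∀ i x,
      Coalgebra.comul (R := k) (coeff M (ξ i) x) = (coeff M (ξ i)).rTensor H (M.ρ x)) :
    M.IsComodule := by
  refine isComodule_iff.2
    ⟨LinearMap.ext fun x => hξ _ _ fun i => ?_, fun f g x => hξ _ _ fun i => ?_⟩
  · rw [← apply_coeff, counit_coeff, LinearMap.id_apply]
  · rw [← apply_slice_rTensor_coeff, ← comul_coeff, apply_slice_comul_coeff]

section Tensor

lemma rTensor_mul'_comp_map_tensor {A : Type*} [Ring A] [Algebra k A] (φ : M.X →ₗ[k] A)
    (ψ : N.X →ₗ[k] A) (x : M.X) (y : N.X) :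
    (LinearMap.mul' k A ∘ₗ TensorProduct.map φ ψ).rTensor H ((M.tensor N).ρ (x ⊗ₜ y)) =
      φ.rTensor H (M.ρ x) * ψ.rTensor H (N.ρ y) := by
  change (LinearMap.mul' k A ∘ₗ TensorProduct.map φ ψ).rTensor H
    ((LinearMap.mul' k H).lTensor (M.X ⊗[k] N.X)
      (TensorProduct.tensorTensorTensorComm k M.X H N.X H (M.ρ x ⊗ₜ N.ρ y))) = _
  induction M.ρ x with
  | zero => simp
  | add u u' hu hu' => simp only [add_tmul, map_add, add_mul, hu, hu']
  | tmul a g =>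
    induction N.ρ y with
    | zero => simp
    | add v v' hv hv' => simp only [tmul_add, map_add, mul_add, hv, hv']
    | tmul b h => simp

lemma coeff_tensor (ξ : Module.Dual k M.X) (η : Module.Dual k N.X) (x : M.X) (y : N.X) :
    coeff (M.tensor N) (TensorProduct.dualDistrib k M.X N.X (ξ ⊗ₜ η)) (x ⊗ₜ y) =
      coeff M ξ x * coeff N η y := by
  have h : TensorProduct.dualDistrib k M.X N.X (ξ ⊗ₜ η) =
      LinearMap.mul' k k ∘ₗ TensorProduct.map ξ η := TensorProduct.ext' fun a b => by simp
  rw [h]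
  exact (congrArg (Algebra.TensorProduct.lid k H) (rTensor_mul'_comp_map_tensor ξ η x y)).trans
    (map_mul (Algebra.TensorProduct.lid k H) _ _)

lemma isComodule_tensor (hM : M.IsComodule) (hN : N.IsComodule) : (M.tensor N).IsComodule := by
  let pure (p : Module.Dual k M.X × Module.Dual k N.X) : Module.Dual k (M.tensor N).X :=
    TensorProduct.dualDistrib k M.X N.X (p.1 ⊗ₜ p.2)
  have separating (u v) (huv : ∀ p, pure p u = pure p v) : u = v := by
    refine slice_ext fun η => Module.eval_apply_injective k <| LinearMap.ext fun ξ => ?_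
    have h : pure (ξ, η) = ξ ∘ₗ slice M.X η :=
      TensorProduct.ext' fun x y => by simp [pure, mul_comm]
    simpa only [h] using! huv (ξ, η)
  have counit_coeff (p) : Coalgebra.counit ∘ₗ coeff (M.tensor N) (pure p) = pure p :=
    TensorProduct.ext' fun x y => (congrArg Coalgebra.counit (coeff_tensor p.1 p.2 x y)).trans <|
      (Bialgebra.counit_mul _ _).trans <|
        congrArg₂ (· * ·) (hM.counit_coeff p.1 x) (hN.counit_coeff p.2 y)
  have comul_coeff (p) : Coalgebra.comul ∘ₗ coeff (M.tensor N) (pure p) =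
      (coeff (M.tensor N) (pure p)).rTensor H ∘ₗ (M.tensor N).ρ := by
    have h : coeff (M.tensor N) (pure p) =
        LinearMap.mul' k H ∘ₗ TensorProduct.map (coeff M p.1) (coeff N p.2) :=
      TensorProduct.ext' (coeff_tensor p.1 p.2)
    rw [h]
    exact TensorProduct.ext' fun x y => (Bialgebra.comul_mul _ _).trans <|
      (congrArg₂ (· * ·) (hM.comul_coeff p.1 x) (hN.comul_coeff p.2 y)).trans
        (rTensor_mul'_comp_map_tensor (coeff M p.1) (coeff N p.2) x y).symm
  exact isComodule_of_coeff pure separating (fun p => LinearMap.congr_fun (counit_coeff p))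
    fun p => LinearMap.congr_fun (comul_coeff p)

end Tensor

end Coefficients

section CoeffSpace

/-- The coefficient space of a comodule `M`: the span in `H` of the matrix coefficients of `M`.
For a simple comodule it is the simple subcoalgebra attached to `M`. -/
noncomputable def coeffSpace (M : Comod k H) : Submodule k H := Submodule.map₂ (coeff M) ⊤ ⊤

variable {M N : Comod k H}

lemma coeff_mem_coeffSpace (ξ : Module.Dual k M.X) (x : M.X) : coeff M ξ x ∈ coeffSpace M :=
  Submodule.apply_mem_map₂ _ trivial trivial

lemma coeffSpace_le_iff {P : Submodule k H} : coeffSpace M ≤ P ↔ ∀ ξ x, coeff M ξ x ∈ P := by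
  simp [coeffSpace, Submodule.map₂_le]

instance finiteDimensional_coeffSpace [FiniteDimensional k M.X] :
    FiniteDimensional k (coeffSpace M) :=
  Module.Finite.iff_fg.2 (Submodule.FG.map₂ _ Module.Finite.fg_top Module.Finite.fg_top)

lemma finrank_coeffSpace_le [FiniteDimensional k M.X] :
    Module.finrank k (coeffSpace M) ≤ Module.finrank k M.X ^ 2 := by
  have h : coeffSpace M ≤ LinearMap.range (TensorProduct.lift (coeff M)) :=
    coeffSpace_le_iff.2 fun ξ x => ⟨ξ ⊗ₜ x, TensorProduct.lift.tmul ξ x⟩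
  calc Module.finrank k (coeffSpace M)
      ≤ Module.finrank k (LinearMap.range (TensorProduct.lift (coeff M))) :=
        Submodule.finrank_mono h
    _ ≤ Module.finrank k (Module.Dual k M.X ⊗[k] M.X) := LinearMap.finrank_range_le _
    _ = Module.finrank k M.X ^ 2 := by
        rw [Module.finrank_tensorProduct, Subspace.dual_finrank_eq, sq]

lemma IsHom.coeffSpace_le_of_injective {φ : M.X →ₗ[k] N.X} (hφ : IsHom M N φ)
    (hinj : Function.Injective φ) : coeffSpace M ≤ coeffSpace N := by
  refine coeffSpace_le_iff.2 fun ξ x => ?_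
  obtain ⟨η, rfl⟩ := LinearMap.dualMap_surjective_of_injective hinj ξ
  rw [LinearMap.dualMap_apply', hφ.coeff_comp]
  exact coeff_mem_coeffSpace η (φ x)

lemma IsHom.coeffSpace_le_of_surjective {φ : M.X →ₗ[k] N.X} (hφ : IsHom M N φ)
    (hsurj : Function.Surjective φ) : coeffSpace N ≤ coeffSpace M := by
  refine coeffSpace_le_iff.2 fun ξ y => ?_
  obtain ⟨x, rfl⟩ := hsurj y
  rw [← LinearMap.comp_apply, ← hφ.coeff_comp]
  exact coeff_mem_coeffSpace (ξ ∘ₗ φ) x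

lemma Iso.coeffSpace_eq (h : Iso M N) : coeffSpace M = coeffSpace N := by
  obtain ⟨e, he⟩ := h
  exact (he.coeffSpace_le_of_injective e.injective).antisymm
    (he.coeffSpace_le_of_surjective e.surjective)

lemma coeffSpace_unit : coeffSpace (unit k H) = 1 := by
  have hcoeff (ξ : Module.Dual k k) (x : k) : coeff (unit k H) ξ x = algebraMap k H (ξ x) :=
    (TensorProduct.lid_tmul 1 (ξ x)).trans (Algebra.algebraMap_eq_smul_one _).symm
  refine le_antisymm (coeffSpace_le_iff.2 fun ξ x => ?_) ?_
  · exact Submodule.mem_one.2 ⟨ξ x, (hcoeff ξ x).symm⟩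
  · refine Submodule.one_le.2 ?_
    have h : coeff (unit k H) LinearMap.id (1 : k) = 1 := (hcoeff _ 1).trans (map_one _)
    exact h ▸ coeff_mem_coeffSpace (M := unit k H) LinearMap.id (1 : k)

lemma coeffSpace_dsum : coeffSpace (M.dsum N) = coeffSpace M ⊔ coeffSpace N := by
  refine le_antisymm (coeffSpace_le_iff.2 fun ξ z => ?_) <|
    sup_le (isHom_inl.coeffSpace_le_of_injective LinearMap.inl_injective)
      (isHom_inr.coeffSpace_le_of_injective LinearMap.inr_injective)
  obtain ⟨x, y⟩ : M.X × N.X := z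
  let inl := LinearMap.inl k M.X N.X
  let inr := LinearMap.inr k M.X N.X
  have hxy : coeff (M.dsum N) ξ (x, y) =
      coeff (M.dsum N) ξ (inl x) + coeff (M.dsum N) ξ (inr y) :=
    (congrArg (coeff (M.dsum N) ξ) (Prod.fst_add_snd (x, y)).symm).trans
      (map_add (coeff (M.dsum N) ξ) (inl x) (inr y))
  exact hxy ▸ Submodule.add_mem_sup
    (LinearMap.congr_fun (isHom_inl.coeff_comp ξ) x ▸ coeff_mem_coeffSpace (ξ ∘ₗ inl) x)
    (LinearMap.congr_fun (isHom_inr.coeff_comp ξ) y ▸ coeff_mem_coeffSpace (ξ ∘ₗ inr) y)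

lemma coeffSpace_tensor [FiniteDimensional k M.X] [FiniteDimensional k N.X] :
    coeffSpace (M.tensor N) = coeffSpace M * coeffSpace N := by
  refine le_antisymm (coeffSpace_le_iff.2 fun ζ z => ?_) ?_
  · obtain ⟨t, rfl⟩ := (TensorProduct.dualDistribEquiv k M.X N.X).surjective ζ
    let coeffMN : Module.Dual k (M.X ⊗[k] N.X) →ₗ[k] M.X ⊗[k] N.X →ₗ[k] H := coeff (M.tensor N)
    let c := coeffMN ∘ₗ TensorProduct.dualDistrib k M.X N.X
    have hc : ∀ t, ∀ z, c t z ∈ coeffSpace M * coeffSpace N := fun t z => by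
      induction t with
      | zero => simp only [map_zero, LinearMap.zero_apply, zero_mem]
      | add t u ht hu => simpa only [map_add, LinearMap.add_apply] using add_mem ht hu
      | tmul ξ η =>
        induction z with
        | zero => simp only [map_zero, zero_mem]
        | add z w hz hw => simpa only [map_add] using add_mem hz hw
        | tmul x y =>
          exact (coeff_tensor ξ η x y).symm ▸
            Submodule.mul_mem_mul (coeff_mem_coeffSpace ξ x) (coeff_mem_coeffSpace η y)
    exact hc t z
  · let P := coeffSpace (M.tensor N)
    refine Submodule.mul_le.2 fun a ha b hb => ?_
    refine coeffSpace_le_iff (P := P.comap (LinearMap.mulRight k b)).2 (fun ξ x => ?_) ha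
    refine coeffSpace_le_iff (P := P.comap (LinearMap.mulLeft k (coeff M ξ x))).2 (fun η y => ?_) hb
    have h : coeff M ξ x * coeff N η y ∈ P :=
      coeff_tensor ξ η x y ▸ coeff_mem_coeffSpace (M := M.tensor N) _ _
    exact h

end CoeffSpace

section Subcomodule

variable {M N : Comod k H}

lemma isSubcomodule_iSup {ι : Sort*} {L : ι → Submodule k M.X} (hL : ∀ i, M.IsSubcomodule (L i)) :
    M.IsSubcomodule (⨆ i, L i) := by
  simp only [isSubcomodule_iff] at *
  exact fun f => (iSup_le fun i x hx => Submodule.mem_iSup_of_mem i (hL i f x hx) :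
    ⨆ i, L i ≤ (⨆ i, L i).comap (act M f))

lemma IsHom.isSubcomodule_ker {φ : M.X →ₗ[k] N.X} (hφ : IsHom M N φ) :
    M.IsSubcomodule (LinearMap.ker φ) :=
  isSubcomodule_iff.2 fun f x hx => by
    rw [LinearMap.mem_ker, isHom_iff.1 hφ, LinearMap.mem_ker.1 hx, map_zero]

lemma IsHom.isSubcomodule_map {φ : M.X →ₗ[k] N.X} (hφ : IsHom M N φ) {L : Submodule k M.X}
    (hL : M.IsSubcomodule L) : N.IsSubcomodule (L.map φ) := by
  refine isSubcomodule_iff.2 ?_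
  rintro f _ ⟨x, hx, rfl⟩
  exact ⟨act M f x, isSubcomodule_iff.1 hL f x hx, isHom_iff.1 hφ f x⟩

lemma isSubcomodule_top : M.IsSubcomodule ⊤ := isSubcomodule_iff.2 fun _ _ _ => trivial

lemma IsComodule.isSubcomodule_coeffSpace (hM : M.IsComodule) :
    (regular k H).IsSubcomodule (M.coeffSpace : Submodule k H) := by
  refine isSubcomodule_iff.2 fun f => ?_
  let a : H →ₗ[k] H := act (regular k H) f
  have h : coeffSpace M ≤ (coeffSpace M).comap a := coeffSpace_le_iff.2 fun ξ x => by
    have hfx : coeff M ξ (act M f x) = a (coeff M ξ x) := isHom_iff.1 (hM.isHom_coeff ξ) f x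
    exact Submodule.mem_comap.2 (hfx ▸ coeff_mem_coeffSpace ξ (act M f x))
  exact h

lemma finiteDimensional_range_act (x : M.X) :
    FiniteDimensional k (LinearMap.range ((act M).flip x)) := by
  obtain ⟨s, hs⟩ := TensorProduct.exists_finset (M.ρ x)
  classical
  refine Submodule.finiteDimensional_of_le (S₂ := Submodule.span k (s.image Prod.fst)) ?_
  rintro _ ⟨f, rfl⟩
  rw [LinearMap.flip_apply, act_apply, hs, map_sum]
  refine Submodule.sum_mem _ fun p hp => ?_
  rw [slice_tmul]
  exact Submodule.smul_mem _ _ (Submodule.subset_span (Finset.mem_image_of_mem Prod.fst hp))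

lemma IsComodule.isSubcomodule_range_act (hM : M.IsComodule) (x : M.X) :
    M.IsSubcomodule (LinearMap.range ((act M).flip x)) := by
  refine isSubcomodule_iff.2 ?_
  rintro f _ ⟨g, rfl⟩
  exact ⟨_, ((isComodule_iff.1 hM).2 f g x).symm⟩

lemma IsComodule.mem_range_act (hM : M.IsComodule) (x : M.X) :
    x ∈ LinearMap.range ((act M).flip x) :=
  ⟨Coalgebra.counit, by rw [LinearMap.flip_apply, (isComodule_iff.1 hM).1, LinearMap.id_apply]⟩

lemma IsComodule.exists_isSimple_sub (hM : M.IsComodule) {L : Submodule k M.X}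
    (hL : M.IsSubcomodule L) (hne : L ≠ ⊥) :
    ∃ (K : Submodule k M.X) (hK : M.IsSubcomodule K), K ≤ L ∧ (M.sub K hK).IsSimple := by
  obtain ⟨x, hxL, hx⟩ := L.exists_mem_ne_zero_of_ne_bot hne
  have cyclic_le : LinearMap.range ((act M).flip x) ≤ L := by
    rintro _ ⟨f, rfl⟩
    exact isSubcomodule_iff.1 hL f x hxL
  have cyclic_ne : LinearMap.range ((act M).flip x) ≠ ⊥ :=
    (Submodule.ne_bot_iff _).2 ⟨x, hM.mem_range_act x, hx⟩
  obtain ⟨K, ⟨hK, hKL, hKne, hKfin⟩, hmin⟩ := exists_minimalFor_of_wellFoundedLT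
    (fun K : Submodule k M.X => M.IsSubcomodule K ∧ K ≤ L ∧ K ≠ ⊥ ∧ FiniteDimensional k K)
    (fun K => Module.finrank k K)
    ⟨_, hM.isSubcomodule_range_act x, cyclic_le, cyclic_ne, finiteDimensional_range_act x⟩
  refine ⟨K, hK, hKL, isComodule_sub hM hK, K.nontrivial_iff_ne_bot.2 hKne, hKfin, fun P hP => ?_⟩
  refine or_iff_not_imp_left.2 fun hPne => Submodule.eq_top_of_finrank_eq ?_
  have hPK : P.map K.subtype ≤ K := Submodule.map_subtype_le K P
  have hPne' : P.map K.subtype ≠ ⊥ := fun h =>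
    hPne (Submodule.map_injective_of_injective K.injective_subtype
      (h.trans (Submodule.map_bot _).symm))
  have hle : Module.finrank k K ≤ Module.finrank k (P.map K.subtype) :=
    hmin ⟨(isHom_subtype hK).isSubcomodule_map hP, hPK.trans hKL, hPne',
      Submodule.finiteDimensional_of_le hPK⟩ (Submodule.finrank_mono hPK)
  exact (Submodule.finrank_le P).antisymm (hle.trans_eq (Submodule.finrank_map_subtype_eq K P))

end Subcomodule

section Schur

variable {M N : Comod k H}

lemma Iso.symm (h : Iso M N) : Iso N M := by
  obtain ⟨e, he⟩ := h
  refine ⟨e.symm, isHom_iff.2 fun f x => e.injective ?_⟩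
  have h := isHom_iff.1 he f (e.symm x)
  simp only [LinearEquiv.coe_coe, LinearEquiv.apply_symm_apply] at h ⊢
  exact h.symm

lemma Iso.trans {P : Comod k H} (h : Iso M N) (h' : Iso N P) : Iso M P := by
  obtain ⟨e, he⟩ := h
  obtain ⟨e', he'⟩ := h'
  exact ⟨e.trans e', he'.comp he⟩

lemma IsHom.iso {φ : M.X →ₗ[k] N.X} (hφ : IsHom M N φ) (h : Function.Bijective φ) : Iso M N :=
  ⟨LinearEquiv.ofBijective φ h, hφ⟩

lemma IsSimple.bijective_of_ne_zero (hM : M.IsSimple) (hN : N.IsSimple) {φ : M.X →ₗ[k] N.X}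
    (hφ : IsHom M N φ) (hne : φ ≠ 0) : Function.Bijective φ := by
  constructor
  · refine LinearMap.ker_eq_bot.1 ((hM.2.2.2 _ hφ.isSubcomodule_ker).resolve_right fun h => ?_)
    exact hne (LinearMap.ker_eq_top.1 h)
  · have hrange : N.IsSubcomodule (LinearMap.range φ) :=
      LinearMap.range_eq_map φ ▸ hφ.isSubcomodule_map isSubcomodule_top
    refine LinearMap.range_eq_top.1 ((hN.2.2.2 _ hrange).resolve_left fun h => ?_)
    exact hne (LinearMap.range_eq_bot.1 h)

lemma IsSimple.exists_eq_smul [IsAlgClosed k] (hM : M.IsSimple) (hN : N.IsSimple)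
    {φ ψ : M.X →ₗ[k] N.X} (hφ : IsHom M N φ) (hψ : IsHom M N ψ) (hne : φ ≠ 0) :
    ∃ c : k, ψ = c • φ := by
  have := hM.2.1
  have := hM.2.2.1
  let e := LinearEquiv.ofBijective φ (hM.bijective_of_ne_zero hN hφ hne)
  obtain ⟨c, hc⟩ := Module.End.exists_eigenvalue (e.symm.toLinearMap ∘ₗ ψ)
  obtain ⟨x, hx⟩ := hc.exists_hasEigenvector
  have hψx : ψ x = c • φ x := (e.symm_apply_eq.1 hx.apply_eq_smul).trans (map_smul φ c x)
  refine ⟨c, sub_eq_zero.1 ?_⟩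
  by_contra h
  refine hx.2 ((hM.bijective_of_ne_zero hN (hψ.sub_smul hφ c) h).1 ?_)
  rw [map_zero, LinearMap.sub_apply, LinearMap.smul_apply, hψx, sub_self]

end Schur

section PeterWeyl

variable {M N : Comod k H}

lemma IsHom.injective_of_forall_isSimple {φ : M.X →ₗ[k] N.X} (hφ : IsHom M N φ)
    (hM : M.IsComodule)
    (h : ∀ L : Comod k H, L.IsSimple → ∀ θ : L.X →ₗ[k] M.X, IsHom L M θ → φ ∘ₗ θ = 0 → θ = 0) :
    Function.Injective φ := by
  refine LinearMap.ker_eq_bot.1 (by_contra fun hne => ?_)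
  obtain ⟨K, hK, hKker, hKsimple⟩ := hM.exists_isSimple_sub hφ.isSubcomodule_ker hne
  have hzero := h _ hKsimple K.subtype (isHom_subtype hK) (LinearMap.ext fun x => hKker x.2)
  exact Submodule.nontrivial_iff_ne_bot.1 hKsimple.2.1
    (K.range_subtype ▸ hzero ▸ LinearMap.range_zero)

lemma coeff_regular_counit (x : H) :
    coeff (regular k H) (Coalgebra.counit (R := k) (A := H)) x = x :=
  (congrArg (TensorProduct.lid k H) (Coalgebra.rTensor_counit_comul x)).trans
    ((TensorProduct.lid_tmul x 1).trans (one_smul k x))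

lemma IsHom.mem_coeffSpace {φ : M.X →ₗ[k] H} (hφ : IsHom M (regular k H) φ) (x : M.X) :
    φ x ∈ coeffSpace M := by
  have h := LinearMap.congr_fun (hφ.coeff_comp (Coalgebra.counit (R := k) (A := H))) x
  exact h.trans (coeff_regular_counit (φ x)) ▸ coeff_mem_coeffSpace _ x

lemma eq_top_of_forall_isSimple_le (hcss : IsCosemisimple k H) (hM : M.IsComodule)
    {P : Submodule k M.X} (hP : M.IsSubcomodule P)
    (h : ∀ (K : Submodule k M.X) (hK : M.IsSubcomodule K), (M.sub K hK).IsSimple → K ≤ P) :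
    P = ⊤ := by
  obtain ⟨Q, hQ, hPQ⟩ := hcss M hM P hP
  suffices hbot : Q = ⊥ by simpa [hbot] using hPQ.sup_eq_top
  by_contra hne
  obtain ⟨K, hK, hKQ, hKsimple⟩ := hM.exists_isSimple_sub hQ hne
  exact Submodule.nontrivial_iff_ne_bot.1 hKsimple.2.1
    (le_bot_iff.1 (hPQ.disjoint (h K hK hKsimple) hKQ))

theorem iSup_coeffSpace_eq_top (hcss : IsCosemisimple k H) :
    ⨆ (M : Comod k H) (_ : M.IsSimple), coeffSpace M = ⊤ := by
  refine eq_top_of_forall_isSimple_le hcss isComodule_regular ?_ ?_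
  · exact isSubcomodule_iSup fun M => isSubcomodule_iSup fun hM => hM.1.isSubcomodule_coeffSpace
  · intro K hK hKsimple x hx
    have hmem := Submodule.mem_iSup_of_mem (p := fun M => ⨆ _ : M.IsSimple, coeffSpace M)
      _ (Submodule.mem_iSup_of_mem hKsimple ((isHom_subtype hK).mem_coeffSpace ⟨x, hx⟩))
    exact hmem

end PeterWeyl

section Independence

lemma coeffSpace_le_of_forall_coord {κ : Type*} [Finite κ] {M : Comod k H}
    (b : Module.Basis κ k M.X) {P : Submodule k H} (h : ∀ j x, coeff M (b.coord j) x ∈ P) :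
    coeffSpace M ≤ P := by
  have := Fintype.ofFinite κ
  refine coeffSpace_le_iff.2 fun ξ x => ?_
  rw [← b.sum_dual_apply_smul_coord ξ, map_sum, LinearMap.sum_apply]
  refine Submodule.sum_mem _ fun j _ => ?_
  rw [map_smul, LinearMap.smul_apply]
  exact P.smul_mem _ (h j x)

variable {ι : Type} [Fintype ι] {T : ι → Comod k H} {κ : ι → Type} [∀ i, Fintype (κ i)]
  (b : ∀ i, Module.Basis (κ i) k (T i).X)

/-- The map `⨁ᵢ (T i)^κᵢ → H`, where `κᵢ` indexes a basis `b i` of `T i`, given on the `j`-th copy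
of `T i` by the matrix coefficients for the `j`-th coordinate form of `b i`. -/
noncomputable def sumCoeff : (∀ p : Σ i, κ i, (T p.1).X) →ₗ[k] H :=
  ∑ p : Σ i, κ i, coeff (T p.1) ((b p.1).coord p.2) ∘ₗ LinearMap.proj p

lemma sumCoeff_apply (x : ∀ p : Σ i, κ i, (T p.1).X) :
    sumCoeff b x = ∑ p, coeff (T p.1) ((b p.1).coord p.2) (x p) := by
  rw [sumCoeff, LinearMap.sum_apply]
  rfl

lemma isHom_sumCoeff (hT : ∀ i, (T i).IsComodule) :
    IsHom (pi fun p : Σ i, κ i => T p.1) (regular k H) (sumCoeff b) :=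
  IsHom.sum fun p _ => ((hT p.1).isHom_coeff _).comp (isHom_proj p)

lemma range_sumCoeff : LinearMap.range (sumCoeff b) = ⨆ i, coeffSpace (T i) := by
  refine le_antisymm ?_ (iSup_le fun i => coeffSpace_le_of_forall_coord (b i) fun j x => ?_)
  · rintro _ ⟨x, rfl⟩
    rw [sumCoeff_apply]
    exact Submodule.sum_mem _ fun p _ => Submodule.mem_iSup_of_mem p.1 (coeff_mem_coeffSpace _ _)
  · classical
    refine ⟨Pi.single ⟨i, j⟩ x, ?_⟩
    rw [sumCoeff_apply, Finset.sum_eq_single ⟨i, j⟩]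
    · rw [Pi.single_eq_same]
    · intro p _ hp
      rw [Pi.single_eq_of_ne hp, map_zero]
    · exact fun h => absurd (Finset.mem_univ _) h

variable [IsAlgClosed k]

lemma IsSimple.eq_zero_of_sum_coord_eq_zero (hT : ∀ i, (T i).IsSimple)
    (hne : ∀ i j, Iso (T i) (T j) → i = j) {L : Comod k H} (hL : L.IsSimple)
    (θ : ∀ p : Σ i, κ i, L.X →ₗ[k] (T p.1).X) (hθ : ∀ p, IsHom L (T p.1) (θ p))
    (hsum : ∀ x, ∑ p, (b p.1).coord p.2 (θ p x) = 0) (p : Σ i, κ i) : θ p = 0 := by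
  by_contra hp
  have hbij := hL.bijective_of_ne_zero (hT p.1) (hθ p) hp
  obtain ⟨x, hx⟩ := hbij.2 (b p.1 p.2)
  have hterm : ∀ r, r ≠ p → (b r.1).coord r.2 (θ r x) = 0 := by
    rintro ⟨i, j⟩ hr
    by_cases hzero : θ ⟨i, j⟩ = 0
    · rw [hzero, LinearMap.zero_apply, map_zero]
    obtain ⟨i₀, j₀⟩ := p
    obtain rfl : i₀ = i := hne _ _ <| ((hθ _).iso hbij).symm.trans
      ((hθ ⟨i, j⟩).iso (hL.bijective_of_ne_zero (hT i) (hθ ⟨i, j⟩) hzero))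
    obtain ⟨c, hc⟩ := hL.exists_eq_smul (hT i₀) (hθ ⟨i₀, j₀⟩) (hθ ⟨i₀, j⟩) hp
    have hj : j₀ ≠ j := fun h => hr (h ▸ rfl)
    rw [hc, LinearMap.smul_apply, hx, map_smul, Module.Basis.coord_apply, Module.Basis.repr_self,
      Finsupp.single_eq_of_ne hj.symm, smul_zero]
  have hone := hsum x
  rw [Finset.sum_eq_single p (fun r _ => hterm r) (fun h => absurd (Finset.mem_univ p) h), hx,
    Module.Basis.coord_apply, Module.Basis.repr_self, Finsupp.single_eq_same] at hone
  exact one_ne_zero hone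

lemma sumCoeff_injective (hT : ∀ i, (T i).IsSimple) (hne : ∀ i j, Iso (T i) (T j) → i = j) :
    Function.Injective (sumCoeff b) := by
  have hT' (i : ι) : (T i).IsComodule := (hT i).1
  refine (isHom_sumCoeff b hT').injective_of_forall_isSimple (isComodule_pi fun p => hT' p.1)
    fun L hL θ hθ hzero => ?_
  have hcounit (x : L.X) : ∑ p : Σ i, κ i, (b p.1).coord p.2 (θ x p) = 0 := by
    have h : ∑ p : Σ i, κ i, coeff (T p.1) ((b p.1).coord p.2) (θ x p) = 0 :=
      (sumCoeff_apply b (θ x)).symm.trans (LinearMap.congr_fun hzero x)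
    simpa only [map_sum, (hT' _).counit_coeff, map_zero] using
      congrArg (Coalgebra.counit (R := k)) h
  have hcomp := hL.eq_zero_of_sum_coord_eq_zero b hT hne
    (fun p => LinearMap.proj p ∘ₗ θ) (fun p => (isHom_proj p).comp hθ) hcounit
  exact LinearMap.ext fun x => funext fun p => LinearMap.congr_fun (hcomp p) x

theorem finrank_iSup_coeffSpace (hT : ∀ i, (T i).IsSimple)
    (hne : ∀ i j, Iso (T i) (T j) → i = j) :
    Module.finrank k ↥(⨆ i, coeffSpace (T i)) = ∑ i, Module.finrank k (T i).X ^ 2 := by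
  have hfin (i : ι) : FiniteDimensional k (T i).X := (hT i).2.2.1
  let b (i : ι) := Module.finBasis k (T i).X
  calc Module.finrank k ↥(⨆ i, coeffSpace (T i))
      = Module.finrank k (∀ p : Σ i, Fin (Module.finrank k (T i).X), (T p.1).X) := by
        rw [← range_sumCoeff b, LinearMap.finrank_range_of_inj (sumCoeff_injective b hT hne)]
    _ = ∑ i, ∑ _j : Fin (Module.finrank k (T i).X), Module.finrank k (T i).X :=
        (Module.finrank_pi_fintype k).trans (Fintype.sum_sigma _)
    _ = ∑ i, Module.finrank k (T i).X ^ 2 := by simp [sq]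

theorem IsSimple.exists_iso_of_coeffSpace_le {ι : Type} [Finite ι] {T : ι → Comod k H}
    (hT : ∀ i, (T i).IsSimple) (hne : ∀ i j, Iso (T i) (T j) → i = j) {L : Comod k H}
    (hL : L.IsSimple) (hLT : coeffSpace L ≤ ⨆ i, coeffSpace (T i)) : ∃ i, Iso L (T i) := by
  have := Fintype.ofFinite ι
  by_contra! hLne
  let T' (o : Option ι) : Comod k H := o.elim L T
  have hT' : ∀ o, (T' o).IsSimple
    | none => hL
    | some i => hT i
  have hne' : ∀ o o', Iso (T' o) (T' o') → o = o'
    | none, none, _ => rfl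
    | none, some j, h => (hLne j h).elim
    | some i, none, h => (hLne i h.symm).elim
    | some i, some j, h => congrArg some (hne i j h)
  have hsup : ⨆ o, coeffSpace (T' o) = ⨆ i, coeffSpace (T i) :=
    (iSup_option _).trans (sup_eq_right.2 hLT)
  have hrank : ∑ i, Module.finrank k (T i).X ^ 2 =
      Module.finrank k L.X ^ 2 + ∑ i, Module.finrank k (T i).X ^ 2 :=
    calc ∑ i, Module.finrank k (T i).X ^ 2 = ∑ o, Module.finrank k (T' o).X ^ 2 := by
          rw [← finrank_iSup_coeffSpace hT hne, ← hsup, finrank_iSup_coeffSpace hT' hne']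
      _ = _ := Fintype.sum_option _
  have := hL.2.1
  have := hL.2.2.1
  have : 0 < Module.finrank k L.X ^ 2 := pow_pos Module.finrank_pos 2
  lia

end Independence

section Commutation

variable [IsAlgClosed k]

lemma IsSimple.finrank_coeffSpace {M : Comod k H} (hM : M.IsSimple) :
    Module.finrank k (coeffSpace M) = Module.finrank k M.X ^ 2 := by
  have h := finrank_iSup_coeffSpace (T := fun _ : Unit => M) (fun _ => hM) fun _ _ _ => rfl
  rwa [iSup_unique, Fintype.sum_unique] at h

lemma IsComodule.exists_coeffSpace_le {M : Comod k H} [Nontrivial M.X] [FiniteDimensional k M.X]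
    (hM : M.IsComodule) {ι : Type} [Finite ι] {T : ι → Comod k H} (hT : ∀ i, (T i).IsSimple)
    (hne : ∀ i j, Iso (T i) (T j) → i = j) (hMT : coeffSpace M ≤ ⨆ i, coeffSpace (T i)) :
    ∃ i, coeffSpace (T i) ≤ coeffSpace M ∧ Module.finrank k (T i).X ≤ Module.finrank k M.X := by
  obtain ⟨K, hK, -, hKsimple⟩ := hM.exists_isSimple_sub isSubcomodule_top top_ne_bot
  have hKM : coeffSpace (M.sub K hK) ≤ coeffSpace M :=
    (isHom_subtype hK).coeffSpace_le_of_injective K.injective_subtype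
  obtain ⟨i, hi⟩ := hKsimple.exists_iso_of_coeffSpace_le hT hne (hKM.trans hMT)
  obtain ⟨e, -⟩ := id hi
  exact ⟨i, hi.coeffSpace_eq.symm.trans_le hKM, e.finrank_eq.symm.trans_le K.finrank_le⟩

lemma IsComodule.coeffSpace_eq_of_le_sup {M Q U : Comod k H} [Nontrivial M.X]
    [FiniteDimensional k M.X] (hM : M.IsComodule) (hQ : Q.IsSimple) (hU : U.IsSimple)
    (hle : coeffSpace M ≤ coeffSpace Q ⊔ coeffSpace U)
    (hMQ : Module.finrank k M.X < Module.finrank k Q.X)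
    (hUM : Module.finrank k U.X = Module.finrank k M.X) : coeffSpace M = coeffSpace U := by
  have hQU : ¬Iso Q U := fun ⟨e, _⟩ => hMQ.ne' (e.finrank_eq.trans hUM)
  obtain ⟨T, rfl, rfl⟩ : ∃ T : Bool → Comod k H, T true = Q ∧ T false = U :=
    ⟨fun b => bif b then Q else U, rfl, rfl⟩
  have hT : ∀ b, (T b).IsSimple := Bool.forall_bool.2 ⟨hU, hQ⟩
  have hne : ∀ b b', Iso (T b) (T b') → b = b'
    | true, true, _ | false, false, _ => rfl
    | true, false, h => (hQU h).elim
    | false, true, h => (hQU h.symm).elim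
  have hsup : ⨆ b, coeffSpace (T b) = coeffSpace (T true) ⊔ coeffSpace (T false) := iSup_bool_eq
  obtain ⟨_ | _, hTM, hdim⟩ := hM.exists_coeffSpace_le hT hne (hle.trans_eq hsup.symm)
  · refine (Submodule.eq_of_le_of_finrank_le hTM ?_).symm
    rw [hU.finrank_coeffSpace, hUM]
    exact finrank_coeffSpace_le
  · exact absurd hMQ hdim.not_gt

/- `V ⊗ D` and `D ⊗ V` have the same coefficients: a simple subcomodule of `D ⊗ V` is `Q` or `U`,
as its coefficients lie in those of `V ⊗ V ⊗ V`, and `Q` is too big. -/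
theorem commute_coeffSpace_of_fusion {V D P Q U : Comod k H} (hV : V.IsSimple) (hD : D.IsSimple)
    (hP : P.IsSimple) (hQ : Q.IsSimple) (hU : U.IsSimple) (hVV : Iso (V.tensor V) (P.dsum D))
    (hVP : Iso (V.tensor P) (Q.dsum U)) (hVD : Iso (V.tensor D) U)
    (hdim : Module.finrank k D.X * Module.finrank k V.X < Module.finrank k Q.X) :
    Commute (coeffSpace D) (coeffSpace V) := by
  have := hV.2.2.1
  have := hD.2.2.1
  have := hP.2.2.1
  have hCVV : coeffSpace V * coeffSpace V = coeffSpace P ⊔ coeffSpace D := by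
    rw [← coeffSpace_tensor, hVV.coeffSpace_eq, coeffSpace_dsum]
  have hCVP : coeffSpace V * coeffSpace P = coeffSpace Q ⊔ coeffSpace U := by
    rw [← coeffSpace_tensor, hVP.coeffSpace_eq, coeffSpace_dsum]
  have hCVD : coeffSpace V * coeffSpace D = coeffSpace U := by
    rw [← coeffSpace_tensor, hVD.coeffSpace_eq]
  have hle : coeffSpace (D.tensor V) ≤ coeffSpace Q ⊔ coeffSpace U :=
    calc coeffSpace (D.tensor V) = coeffSpace D * coeffSpace V := coeffSpace_tensor
      _ ≤ coeffSpace V * coeffSpace V * coeffSpace V :=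
          mul_le_mul_left (hCVV ▸ le_sup_right) _
      _ = coeffSpace Q ⊔ coeffSpace U := by
          rw [mul_assoc, hCVV, Submodule.mul_sup, hCVP, hCVD, sup_assoc, sup_idem]
  have hDV : Module.finrank k (D.tensor V).X = Module.finrank k D.X * Module.finrank k V.X :=
    Module.finrank_tensorProduct
  have hUDV : Module.finrank k U.X = Module.finrank k (D.tensor V).X := by
    obtain ⟨e, -⟩ := hVD
    rw [hDV, mul_comm]
    exact e.finrank_eq.symm.trans Module.finrank_tensorProduct
  have := hU.2.1
  have := hU.2.2.1
  have hpos : 0 < Module.finrank k (D.tensor V).X := hUDV ▸ Module.finrank_pos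
  have : Nontrivial (D.tensor V).X := Module.nontrivial_of_finrank_pos hpos
  have : FiniteDimensional k (D.tensor V).X := Module.finite_of_finrank_pos hpos
  calc coeffSpace D * coeffSpace V = coeffSpace (D.tensor V) := coeffSpace_tensor.symm
    _ = coeffSpace U :=
        (isComodule_tensor hD.1 hV.1).coeffSpace_eq_of_le_sup hQ hU hle (hDV ▸ hdim) hUDV
    _ = coeffSpace V * coeffSpace D := hCVD.symm

end Commutation

end Comod

section GKdim

open Filter Topology

lemma tendsto_ofReal_add_div_log (d : ℕ) (r : ℝ) :
    Tendsto (fun n : ℕ => ENNReal.ofReal (d + r / Real.log n)) atTop (𝓝 d) := by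
  have hlog : Tendsto (fun n : ℕ => Real.log n) atTop atTop :=
    Real.tendsto_log_atTop.comp tendsto_natCast_atTop_atTop
  have hlim := (hlog.const_div_atTop r).const_add (d : ℝ)
  rw [add_zero] at hlim
  simpa only [ENNReal.ofReal_natCast] using ENNReal.tendsto_ofReal hlim

lemma log_div_log_le {a c d n : ℕ} (hn : 2 ≤ n) (h : a ≤ c * n ^ d) :
    Real.log a / Real.log n ≤ d + Real.log c / Real.log n := by
  have hlog : 0 < Real.log n := Real.log_pos (by exact_mod_cast hn)
  obtain rfl | ha := Nat.eq_zero_or_pos a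
  · rw [Nat.cast_zero, Real.log_zero, zero_div]
    positivity
  have hc : c ≠ 0 := by
    rintro rfl
    lia
  rw [div_le_iff₀ hlog, add_mul, div_mul_cancel₀ _ hlog.ne']
  calc Real.log a ≤ Real.log (c * n ^ d) :=
        Real.log_le_log (by exact_mod_cast ha) (by exact_mod_cast h)
    _ = d * Real.log n + Real.log c := by
        rw [Real.log_mul (by positivity) (by positivity), Real.log_pow, add_comm]

lemma le_log_div_log {a c d n : ℕ} (hn : 2 ≤ n) (h : n ^ d ≤ c * a) :
    d + -Real.log c / Real.log n ≤ Real.log a / Real.log n := by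
  have hlog : 0 < Real.log n := Real.log_pos (by exact_mod_cast hn)
  have hpos : 0 < c * a := (pow_pos (by lia) d).trans_le h
  have hc : (c : ℝ) ≠ 0 := by exact_mod_cast (Nat.pos_of_mul_pos_right hpos).ne'
  have ha : (a : ℝ) ≠ 0 := by exact_mod_cast (Nat.pos_of_mul_pos_left hpos).ne'
  rw [le_div_iff₀ hlog, add_mul, div_mul_cancel₀ _ hlog.ne', ← sub_eq_add_neg, sub_le_iff_le_add']
  calc d * Real.log n = Real.log (n ^ d) := (Real.log_pow n d).symm
    _ ≤ Real.log (c * a) := Real.log_le_log (by positivity) (by exact_mod_cast h)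
    _ = Real.log c + Real.log a := Real.log_mul hc ha

variable {k : Type} [Field k] {A : Type} [Ring A] [Algebra k A]

lemma GKdim_le_of_finrank_pow_le {d : ℕ}
    (h : ∀ V : Submodule k A, FiniteDimensional k V →
      ∃ c : ℕ, ∀ n > 0, Module.finrank k ↥(V ^ n) ≤ c * n ^ d) :
    GKdim k A ≤ d := by
  refine iSup₂_le fun V hV => ?_
  obtain ⟨c, hc⟩ := h V hV
  rw [← (tendsto_ofReal_add_div_log d (Real.log c)).limsup_eq]
  refine limsup_le_limsup ?_
  filter_upwards [eventually_ge_atTop 2] with n hn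
  exact ENNReal.ofReal_le_ofReal (log_div_log_le hn (hc n (by lia)))

lemma le_GKdim_of_le_finrank_pow {c d : ℕ} (W : Submodule k A) [FiniteDimensional k W]
    (h : ∀ n : ℕ, n ^ d ≤ c * Module.finrank k ↥(W ^ n)) : d ≤ GKdim k A := by
  refine le_trans ?_ (le_iSup₂ (f := fun (V : Submodule k A) (_ : FiniteDimensional k V) =>
    limsup (fun n : ℕ => ENNReal.ofReal (Real.log (Module.finrank k ↥(V ^ n)) / Real.log n))
      atTop) W ‹_›)
  rw [← (tendsto_ofReal_add_div_log d (-Real.log c)).limsup_eq]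
  refine limsup_le_limsup ?_
  filter_upwards [eventually_ge_atTop 2] with n hn
  exact ENNReal.ofReal_le_ofReal (le_log_div_log hn (h n))

lemma exists_le_pow_of_iSup_pow_eq_top {W : Submodule k A} (hone : 1 ≤ W)
    (htop : ⨆ n : ℕ, W ^ n = ⊤) (V : Submodule k A) [FiniteDimensional k V] :
    ∃ n : ℕ, V ≤ W ^ n := by
  have hdir : Directed (· ≤ ·) fun n : ℕ => W ^ n := (pow_right_mono₀ hone).directed_le
  have hcompact := (Submodule.fg_iff_compact V).1 (Module.Finite.iff_fg.1 inferInstance)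
  rw [CompleteLattice.isCompactElement_iff_le_of_directed_sSup_le] at hcompact
  obtain ⟨_, ⟨n, rfl⟩, hn⟩ := hcompact (Set.range fun n : ℕ => W ^ n) (Set.range_nonempty _)
    hdir.directedOn_range (le_top.trans_eq htop.symm)
  exact ⟨n, hn⟩

theorem GKdim_eq_of_finrank_pow {W : Submodule k A} [FiniteDimensional k W] (hone : 1 ≤ W)
    (htop : ⨆ n : ℕ, W ^ n = ⊤) {c c' d : ℕ}
    (hlower : ∀ n : ℕ, n ^ d ≤ c * Module.finrank k ↥(W ^ n))
    (hupper : ∀ n > 0, Module.finrank k ↥(W ^ n) ≤ c' * n ^ d) : GKdim k A = d := by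
  refine (GKdim_le_of_finrank_pow_le fun V hV => ?_).antisymm (le_GKdim_of_le_finrank_pow W hlower)
  obtain ⟨m, hm⟩ := exists_le_pow_of_iSup_pow_eq_top hone htop V
  refine ⟨c' * (m + 1) ^ d, fun n hn => ?_⟩
  have hVn : V ^ n ≤ W ^ ((m + 1) * n) := by
    rw [pow_mul]
    exact pow_le_pow_left' (hm.trans (pow_right_mono₀ hone m.le_succ)) n
  have : FiniteDimensional k ↥(W ^ ((m + 1) * n)) :=
    Module.Finite.iff_fg.2 ((Module.Finite.iff_fg.1 inferInstance : W.FG).pow _)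
  calc Module.finrank k ↥(V ^ n) ≤ Module.finrank k ↥(W ^ ((m + 1) * n)) :=
        Submodule.finrank_mono hVn
    _ ≤ c' * ((m + 1) * n) ^ d := hupper _ (by positivity)
    _ = c' * (m + 1) ^ d * n ^ d := by rw [mul_pow, mul_assoc]

end GKdim

/-- The fusion rules of `GL(2)` for subspaces `C n m` of an algebra, where `C n m` stands for the
span of the matrix coefficients of the irreducible representation `Symⁿ ⊗ detᵐ`. -/
structure IsGL2Fusion {k A : Type*} [CommSemiring k] [Semiring A] [Algebra k A]
    (C : ℕ → ℤ → Submodule k A) : Prop where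
  zero_zero : C 0 0 = 1
  zero_mul_zero (m m' : ℤ) : C 0 m * C 0 m' = C 0 (m + m')
  one_mul_zero (m : ℤ) : C 1 0 * C 0 m = C 1 m
  one_mul_succ (n : ℕ) (m : ℤ) : C 1 0 * C (n + 1) m = C (n + 2) m ⊔ C n (m + 1)
  commute_zero_one : Commute (C 0 1) (C 1 0)

namespace IsGL2Fusion

section Box

variable {k A : Type*} [CommSemiring k] [Semiring A] [Algebra k A] {C : ℕ → ℤ → Submodule k A}

/-- The sum of the subspaces `C n m` with `n ≤ N` and `|m| ≤ K`. -/
def box (C : ℕ → ℤ → Submodule k A) (N K : ℕ) : Submodule k A :=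
  ⨆ p ∈ Finset.range (N + 1) ×ˢ Finset.Icc (-K : ℤ) K, C p.1 p.2

lemma le_box {N K n : ℕ} {m : ℤ} (hn : n ≤ N) (hm : |m| ≤ K) : C n m ≤ box C N K :=
  le_iSup₂_of_le (n, m) (Finset.mem_product.2
    ⟨Finset.mem_range_succ_iff.2 hn, Finset.mem_Icc.2 (abs_le.1 hm)⟩) le_rfl

lemma box_le_iff {N K : ℕ} {P : Submodule k A} :
    box C N K ≤ P ↔ ∀ n m, n ≤ N → |m| ≤ (K : ℤ) → C n m ≤ P := by
  simp only [box, iSup_le_iff, Prod.forall, Finset.mem_product, Finset.mem_range_succ_iff,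
    Finset.mem_Icc, and_imp, abs_le]

lemma mul_box_le_iff {N K : ℕ} {L P : Submodule k A} :
    L * box C N K ≤ P ↔ ∀ n m, n ≤ N → |m| ≤ (K : ℤ) → L * C n m ≤ P := by
  simp only [box, Submodule.mul_iSup, iSup_le_iff, Prod.forall, Finset.mem_product,
    Finset.mem_range_succ_iff, Finset.mem_Icc, and_imp, abs_le]

/-- The subspace generated by `1` and the coefficients of the standard representation. -/
def stdGen (C : ℕ → ℤ → Submodule k A) : Submodule k A := 1 + C 1 0

/-- The subspace generated by `1` and the determinant and its inverse. -/
def detGen (C : ℕ → ℤ → Submodule k A) : Submodule k A := 1 + (C 0 1 + C 0 (-1))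

lemma one_le_stdGen : 1 ≤ stdGen C := le_sup_left

lemma one_le_detGen : 1 ≤ detGen C := le_sup_left

lemma one_le_stdGen_mul_detGen : 1 ≤ stdGen C * detGen C :=
  one_le_mul one_le_stdGen one_le_detGen

variable (hC : IsGL2Fusion C)
include hC

lemma commute_stdGen_detGen : Commute (stdGen C) (detGen C) := by
  let u : (Submodule k A)ˣ := ⟨C 0 1, C 0 (-1), by
    rw [hC.zero_mul_zero, add_neg_cancel, hC.zero_zero], by
    rw [hC.zero_mul_zero, neg_add_cancel, hC.zero_zero]⟩
  have hu : Commute (C 1 0) u := hC.commute_zero_one.symm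
  exact (Commute.one_left _).add_left
    ((Commute.one_right _).add_right (hu.add_right hu.units_inv_right))

lemma one_zero_mul_box_le (N K : ℕ) : C 1 0 * box C N K ≤ box C (N + 1) (K + 1) := by
  refine mul_box_le_iff.2 fun n m hn hm => ?_
  rw [abs_le] at hm
  obtain _ | n := n
  · rw [hC.one_mul_zero]
    exact le_box (by lia) (abs_le.2 (by lia))
  · rw [hC.one_mul_succ]
    exact sup_le (le_box (by lia) (abs_le.2 (by lia))) (le_box (by lia) (abs_le.2 (by lia)))

lemma stdGen_pow_mul_box_le (n N K : ℕ) : stdGen C ^ n * box C N K ≤ box C (n + N) (n + K) := by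
  induction n with
  | zero => rw [pow_zero, one_mul, zero_add, zero_add]
  | succ n ih =>
    calc stdGen C ^ (n + 1) * box C N K = stdGen C * (stdGen C ^ n * box C N K) := by
          rw [pow_succ', mul_assoc]
      _ ≤ stdGen C * box C (n + N) (n + K) := mul_le_mul_right ih _
      _ = box C (n + N) (n + K) + C 1 0 * box C (n + N) (n + K) := by
          rw [stdGen, add_mul, one_mul]
      _ ≤ box C (n + 1 + N) (n + 1 + K) := sup_le
          (box_le_iff.2 fun _ _ hn hm => le_box (by lia) (by lia))
          ((hC.one_zero_mul_box_le _ _).trans_eq (by rw [add_right_comm n N, add_right_comm n K]))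

lemma detGen_pow_le_box (K : ℕ) : detGen C ^ K ≤ box C 0 K := by
  induction K with
  | zero =>
    rw [pow_zero, ← hC.zero_zero]
    exact le_box le_rfl (by rw [abs_zero, Nat.cast_zero])
  | succ K ih =>
    rw [pow_succ']
    refine (mul_le_mul_right ih _).trans (mul_box_le_iff.2 fun n m hn hm => ?_)
    obtain rfl := Nat.le_zero.1 hn
    rw [abs_le] at hm
    rw [detGen, add_mul, add_mul, one_mul, hC.zero_mul_zero, hC.zero_mul_zero]
    exact sup_le (le_box le_rfl (abs_le.2 (by lia)))
      (sup_le (le_box le_rfl (abs_le.2 (by lia))) (le_box le_rfl (abs_le.2 (by lia))))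

theorem pow_le_box (K : ℕ) : (stdGen C * detGen C) ^ K ≤ box C K (2 * K) :=
  calc (stdGen C * detGen C) ^ K = stdGen C ^ K * detGen C ^ K :=
        hC.commute_stdGen_detGen.mul_pow K
    _ ≤ stdGen C ^ K * box C 0 K := mul_le_mul_right (hC.detGen_pow_le_box K) _
    _ ≤ box C K (2 * K) := (hC.stdGen_pow_mul_box_le K 0 K).trans_eq (by rw [add_zero, two_mul])

lemma le_one_zero_pow_mul (n : ℕ) (m : ℤ) : C n m ≤ C 1 0 ^ n * C 0 m := by
  induction n with
  | zero => rw [pow_zero, one_mul]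
  | succ n ih =>
    calc C (n + 1) m ≤ C 1 0 * C n m := by
          obtain _ | n := n
          · rw [hC.one_mul_zero]
          · rw [hC.one_mul_succ]
            exact le_sup_left
      _ ≤ C 1 0 ^ (n + 1) * C 0 m := by
          rw [pow_succ', mul_assoc]
          exact mul_le_mul_right ih _

lemma zero_le_detGen_pow {K : ℕ} {m : ℤ} (hm : |m| ≤ K) : C 0 m ≤ detGen C ^ K := by
  induction K generalizing m with
  | zero =>
    obtain rfl : m = 0 := abs_nonpos_iff.1 hm
    rw [pow_zero, hC.zero_zero]
  | succ K ih =>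
    rw [abs_le] at hm
    have hstep (j : ℤ) (hj : C 0 j ≤ detGen C) (hmj : |-j + m| ≤ K) :
        C 0 m ≤ detGen C ^ (K + 1) := by
      rw [← add_neg_cancel_left j m, ← hC.zero_mul_zero, pow_succ']
      exact mul_le_mul' hj (ih hmj)
    obtain h | rfl | h := lt_trichotomy m 0
    · exact hstep (-1) (le_sup_right.trans le_sup_right) (abs_le.2 (by lia))
    · exact hstep 0 (hC.zero_zero.trans_le one_le_detGen) (abs_le.2 (by lia))
    · exact hstep 1 (le_sup_left.trans le_sup_right) (abs_le.2 (by lia))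

theorem box_le_pow (K : ℕ) : box C K K ≤ (stdGen C * detGen C) ^ K := by
  refine box_le_iff.2 fun n m hn hm => ?_
  calc C n m ≤ C 1 0 ^ n * C 0 m := hC.le_one_zero_pow_mul n m
    _ ≤ stdGen C ^ K * detGen C ^ K := mul_le_mul'
        ((pow_le_pow_left' le_sup_right n).trans (pow_right_mono₀ one_le_stdGen hn))
        (hC.zero_le_detGen_pow hm)
    _ = (stdGen C * detGen C) ^ K := (hC.commute_stdGen_detGen.mul_pow K).symm

lemma iSup_pow_eq_top (htop : ⨆ n, ⨆ m, C n m = ⊤) :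
    ⨆ K : ℕ, (stdGen C * detGen C) ^ K = ⊤ := by
  refine top_le_iff.1 (htop ▸ iSup₂_le fun n m => ?_)
  have hbox : C n m ≤ box C (n + m.natAbs) (n + m.natAbs) :=
    le_box (Nat.le_add_right n _) (by rw [Int.abs_eq_natAbs]; lia)
  exact hbox.trans ((hC.box_le_pow _).trans (le_iSup (fun K : ℕ => (stdGen C * detGen C) ^ K) _))

end Box

section Growth

lemma sum_box (N K : ℕ) :
    ∑ p ∈ Finset.range (N + 1) ×ˢ Finset.Icc (-K : ℤ) K, (p.1 + 1) ^ 2 =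
      (2 * K + 1) * ∑ n ∈ Finset.range (N + 1), (n + 1) ^ 2 := by
  have hcard : (Finset.Icc (-K : ℤ) K).card = 2 * K + 1 := by
    rw [Int.card_Icc]
    lia
  simp only [Finset.sum_product, Finset.sum_const, hcard, smul_eq_mul, Finset.mul_sum]

lemma pow_three_le_sum_sq (N : ℕ) : N ^ 3 ≤ 3 * ∑ n ∈ Finset.range N, (n + 1) ^ 2 := by
  induction N with
  | zero => simp
  | succ N ih =>
    calc (N + 1) ^ 3 ≤ N ^ 3 + 3 * (N + 1) ^ 2 := by lia
      _ ≤ _ := by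
        rw [Finset.sum_range_succ, mul_add]
        gcongr

variable {k : Type*} [Field k] {A : Type*} [Ring A] [Algebra k A] {C : ℕ → ℤ → Submodule k A}
  (hrank : ∀ s : Finset (ℕ × ℤ),
    Module.finrank k ↥(⨆ p ∈ s, C p.1 p.2) = ∑ p ∈ s, (p.1 + 1) ^ 2)
include hrank

lemma finrank_box (N K : ℕ) :
    Module.finrank k ↥(box C N K) = (2 * K + 1) * ∑ n ∈ Finset.range (N + 1), (n + 1) ^ 2 :=
  (hrank _).trans (sum_box N K)

lemma finiteDimensional_box (N K : ℕ) : FiniteDimensional k ↥(box C N K) :=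
  Module.finite_of_finrank_pos <| by
    rw [finrank_box hrank, Finset.sum_range_succ]
    positivity

lemma finrank_box_le (N K : ℕ) :
    Module.finrank k ↥(box C N K) ≤ (2 * K + 1) * (N + 1) ^ 3 := by
  have hsum : ∑ n ∈ Finset.range (N + 1), (n + 1) ^ 2 ≤ (N + 1) * (N + 1) ^ 2 := by
    simpa only [Finset.card_range, smul_eq_mul] using Finset.sum_le_card_nsmul
      (Finset.range (N + 1)) (fun n => (n + 1) ^ 2) ((N + 1) ^ 2)
      fun n hn => Nat.pow_le_pow_left (Finset.mem_range.1 hn) 2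
  rw [finrank_box hrank, pow_succ' _ 2]
  gcongr

lemma pow_four_le_finrank_box (N : ℕ) : N ^ 4 ≤ 3 * Module.finrank k ↥(box C N N) := by
  rw [finrank_box hrank]
  calc N ^ 4 = N * N ^ 3 := pow_succ' N 3
    _ ≤ (2 * N + 1) * (N + 1) ^ 3 := by gcongr <;> lia
    _ ≤ (2 * N + 1) * (3 * ∑ n ∈ Finset.range (N + 1), (n + 1) ^ 2) := by
        gcongr
        exact pow_three_le_sum_sq _
    _ = _ := by rw [mul_left_comm]

end Growth

theorem GKdim_eq_four {k : Type} [Field k] {A : Type} [Ring A] [Algebra k A]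
    {C : ℕ → ℤ → Submodule k A} (hC : IsGL2Fusion C)
    (hrank : ∀ s : Finset (ℕ × ℤ),
      Module.finrank k ↥(⨆ p ∈ s, C p.1 p.2) = ∑ p ∈ s, (p.1 + 1) ^ 2)
    (htop : ⨆ n, ⨆ m, C n m = ⊤) : GKdim k A = 4 := by
  have hfin (n : ℕ) : FiniteDimensional k ↥((stdGen C * detGen C) ^ n) :=
    have := finiteDimensional_box hrank n (2 * n)
    Submodule.finiteDimensional_of_le (hC.pow_le_box n)
  have : FiniteDimensional k ↥(stdGen C * detGen C) := pow_one (stdGen C * detGen C) ▸ hfin 1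
  refine GKdim_eq_of_finrank_pow (c := 3) (c' := 5 * 2 ^ 3) (d := 4) one_le_stdGen_mul_detGen
    (hC.iSup_pow_eq_top htop) (fun n => ?_) fun n hn => ?_
  · exact (pow_four_le_finrank_box hrank n).trans
      (Nat.mul_le_mul_left 3 (Submodule.finrank_mono (hC.box_le_pow n)))
  · have := finiteDimensional_box hrank n (2 * n)
    calc Module.finrank k ↥((stdGen C * detGen C) ^ n)
        ≤ (2 * (2 * n) + 1) * (n + 1) ^ 3 :=
          (Submodule.finrank_mono (hC.pow_le_box n)).trans (finrank_box_le hrank n (2 * n))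
      _ ≤ (5 * n) * (2 * n) ^ 3 := by gcongr <;> lia
      _ = 5 * 2 ^ 3 * n ^ 4 := by ring

end IsGL2Fusion

open Comod in
theorem stmt13_general {k : Type} [Field k] [IsAlgClosed k] {H : Type} [Ring H] [HopfAlgebra k H]
    (hcss : IsCosemisimple k H)
    (S : ℕ → ℤ → Comod k H)
    (hsimple : ∀ n m, (S n m).IsSimple)
    (hcomplete : ∀ M : Comod k H, M.IsSimple → ∃ n m, Comod.Iso M (S n m))
    (hdistinct : ∀ n m n' m', Comod.Iso (S n m) (S n' m') → n = n' ∧ m = m')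
    (hunit : Comod.Iso (S 0 0) (Comod.unit k H))
    (hdim : ∀ n m, Module.finrank k (S n m).X = n + 1)
    (hdet : ∀ m m', Comod.Iso ((S 0 m).tensor (S 0 m')) (S 0 (m + m')))
    (hfus0 : ∀ m, Comod.Iso ((S 1 0).tensor (S 0 m)) (S 1 m))
    (hfus : ∀ n m, Comod.Iso ((S 1 0).tensor (S (n + 1) m))
        ((S (n + 2) m).dsum (S n (m + 1)))) :
    GKdim k H = 4 := by
  have hfin (n m) : FiniteDimensional k (S n m).X := (hsimple n m).2.2.1
  have hC : IsGL2Fusion fun n m => coeffSpace (S n m) :=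
    { zero_zero := hunit.coeffSpace_eq.trans coeffSpace_unit
      zero_mul_zero m m' := coeffSpace_tensor.symm.trans (hdet m m').coeffSpace_eq
      one_mul_zero m := coeffSpace_tensor.symm.trans (hfus0 m).coeffSpace_eq
      one_mul_succ n m :=
        coeffSpace_tensor.symm.trans ((hfus n m).coeffSpace_eq.trans coeffSpace_dsum)
      commute_zero_one := commute_coeffSpace_of_fusion (hsimple 1 0) (hsimple 0 1) (hsimple 2 0)
        (hsimple 3 0) (hsimple 1 1) (hfus 0 0) (hfus 1 0) (hfus0 1) (by simp only [hdim]; lia) }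
  refine hC.GKdim_eq_four (fun s => ?_) (top_le_iff.1 ?_)
  · have h := finrank_iSup_coeffSpace (T := fun p : s => S p.1.1 p.1.2)
      (fun p => hsimple _ _) fun p p' h => Subtype.ext (Prod.ext_iff.2 (hdistinct _ _ _ _ h))
    simp only [hdim] at h
    rw [iSup_subtype', h, Finset.sum_coe_sort s fun p => (p.1 + 1) ^ 2]
  · rw [← iSup_coeffSpace_eq_top hcss]
    refine iSup₂_le fun M hM => ?_
    obtain ⟨n, m, h⟩ := hcomplete M hM
    exact h.coeffSpace_eq.trans_le (le_iSup₂ (f := fun n m => coeffSpace (S n m)) n m)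

/-- Example 3.10 of the paper, case `d = 2`.  Let
`E, F ∈ GL_2(ℂ)` satisfy `FᵀEᵀEF = λ·I` for some `λ ∈ ℂ^×`, and suppose the
solutions `q` of `q² − λ^{-1/2} tr(EᵀE⁻¹) q + 1 = 0` are generic (`q = ±1` or
not a root of unity).  Let `B = G(E,F)` be Mrozinski's quantum group: a
finitely generated cosemisimple Hopf algebra whose measured comodule theory is
that of `O_q(GL(2))` — its simple comodules are `S_{n,m}` (`n ∈ ℕ`, `m ∈ ℤ`,
every simple comodule isomorphic to exactly one of them) with
`dim S_{n,m} = n + 1` (in particular the fundamental comodule `S_{1,0}` is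
`2`-dimensional), `S_{0,0} = 𝟏`, `S_{0,m} ⊗ S_{0,m'} ≅ S_{0,m+m'}`,
`S_{1,0} ⊗ S_{0,m} ≅ S_{1,m}`, and
`S_{1,0} ⊗ S_{n+1,m} ≅ S_{n+2,m} ⊕ S_{n,m+1}`.
Then `GKdim G(E,F) = dim GL(2) = 4`. -/
theorem stmt13 (E F : Matrix (Fin 2) (Fin 2) ℂ) (hE : IsUnit E) (hF : IsUnit F)
    (l : ℂ) (hl : l ≠ 0)
    (hEF : F.transpose * E.transpose * E * F = l • (1 : Matrix (Fin 2) (Fin 2) ℂ))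
    (q : ℂ)
    (hq : ∃ μ : ℂ, μ ^ 2 * l = 1 ∧
      q ^ 2 - μ * (E.transpose * E⁻¹).trace * q + 1 = 0)
    (hgen : q = 1 ∨ q = -1 ∨ ∀ n : ℕ, 0 < n → q ^ n ≠ 1)
    (B : Type) [Ring B] [HopfAlgebra ℂ B]
    (hfg : Algebra.FiniteType ℂ B) (hcss : IsCosemisimple ℂ B)
    (S : ℕ → ℤ → Comod ℂ B)
    (hsimple : ∀ n m, (S n m).IsSimple)
    (hcomplete : ∀ M : Comod ℂ B, M.IsSimple → ∃ n m, Comod.Iso M (S n m))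
    (hdistinct : ∀ n m n' m', Comod.Iso (S n m) (S n' m') → n = n' ∧ m = m')
    (hunit : Comod.Iso (S 0 0) (Comod.unit ℂ B))
    (hdim : ∀ n m, Module.finrank ℂ (S n m).X = n + 1)
    (hdet : ∀ m m', Comod.Iso ((S 0 m).tensor (S 0 m')) (S 0 (m + m')))
    (hfus0 : ∀ m, Comod.Iso ((S 1 0).tensor (S 0 m)) (S 1 m))
    (hfus : ∀ n m, Comod.Iso ((S 1 0).tensor (S (n + 1) m))
        ((S (n + 2) m).dsum (S n (m + 1)))) :
    GKdim ℂ B = 4 :=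
  stmt13_general hcss S hsimple hcomplete hdistinct hunit hdim hdet hfus0 hfus
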